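/- Let f : A → B be a faithfully flat homomorphism of commutative rings, let M′ be a B-module, and let φ : M′ ⊗_A B → B ⊗_A M′ be an isomorphism of B ⊗_A B-modules, where B ⊗_A B acts on M′ ⊗_A B by (b₁ ⊗ b₂)(m ⊗ b) = b₁m ⊗ b₂b and on B ⊗_A M′ by (b₁ ⊗ b₂)(b ⊗ m) = b₁b ⊗ b₂m. Define φ₁ : B ⊗_A M′ ⊗_A B → B ⊗_A B ⊗_A M′, φ₂ : M′ ⊗_A B ⊗_A B → B ⊗_A B ⊗_A M′, and φ₃ : M′ ⊗_A B ⊗_A B → B ⊗_A M′ ⊗_A B by tensoring φ with the identity of B in the first, second, and third tensor positions respectively (so φ₁ = id_B ⊗ φ, φ₂ applies φ to the outer factors M′ and the second B leaving the third B in place, and φ₃ = φ ⊗ id_B). Assume the cocycle condition φ₂ = φ₁ ∘ φ₃. Then M := {m ∈ M′ | 1 ⊗ m = φ(m ⊗ 1)} is an A-submodule of M′ (via f), and the map B ⊗_A M → M′, b ⊗ m ↦ b • m, is bijective. -/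

import Mathlib

open scoped TensorProduct

section DescentData

variable (A B M' : Type u) [CommRing A] [CommRing B] [Algebra A B]
  [AddCommGroup M'] [Module A M'] [Module B M'] [IsScalarTower A B M']

/-- Multiplication by `b : B` on the `B`-module `M'`, as an `A`-linear map. -/
noncomputable def bSmul (b : B) : M' →ₗ[A] M' :=
  (LinearMap.lsmul B M' b).restrictScalars A

/-- `φ₁ = id_B ⊗ φ`, tensoring `φ` with `id_B` in the first position. -/
noncomputable def phiOne (φ : M' ⊗[A] B →ₗ[A] B ⊗[A] M') :
    B ⊗[A] (M' ⊗[A] B) →ₗ[A] B ⊗[A] (B ⊗[A] M') :=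
  TensorProduct.map LinearMap.id φ

/-- `φ₃ = φ ⊗ id_B`, tensoring `φ` with `id_B` in the third position. -/
noncomputable def phiThree (φ : M' ⊗[A] B →ₗ[A] B ⊗[A] M') :
    (M' ⊗[A] B) ⊗[A] B →ₗ[A] (B ⊗[A] M') ⊗[A] B :=
  TensorProduct.map φ LinearMap.id

/-- `φ₂`, tensoring `φ` with `id_B` in the second position: on pure tensors,
`m ⊗ b ⊗ b' ↦ ∑ cᵢ ⊗ b ⊗ mᵢ` where `φ(m ⊗ b') = ∑ cᵢ ⊗ mᵢ`. -/
noncomputable def phiTwo (φ : M' ⊗[A] B →ₗ[A] B ⊗[A] M') :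
    (M' ⊗[A] B) ⊗[A] B →ₗ[A] (B ⊗[A] B) ⊗[A] M' :=
  (TensorProduct.assoc A B B M').symm.toLinearMap ∘ₗ
    TensorProduct.map LinearMap.id (TensorProduct.comm A M' B).toLinearMap ∘ₗ
      (TensorProduct.assoc A B M' B).toLinearMap ∘ₗ
        TensorProduct.map φ LinearMap.id ∘ₗ
          (TensorProduct.assoc A M' B B).symm.toLinearMap ∘ₗ
            TensorProduct.map LinearMap.id (TensorProduct.comm A B B).toLinearMap ∘ₗ
              (TensorProduct.assoc A M' B B).toLinearMap

/-- The canonical map `B ⊗[A] N → M'`, `b ⊗ n ↦ b • n`, for an `A`-submodule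
`N` of the `B`-module `M'`. -/
noncomputable def descentExpansion (N : Submodule A M') : B ⊗[A] N →ₗ[A] M' :=
  TensorProduct.lift
    { toFun := fun b => ((LinearMap.lsmul B M' b).restrictScalars A) ∘ₗ N.subtype
      map_add' := fun b b' => by ext n; simp [add_smul]
      map_smul' := fun a b => by ext n; simp [smul_assoc] }

/-- **Faithfully flat descent for modules.**  Let `A → B` be a faithfully flat
homomorphism of commutative rings, `M'` a `B`-module, and
`φ : M' ⊗[A] B ≃ B ⊗[A] M'` an isomorphism of `B ⊗[A] B`-modules (for the
actions `(b₁ ⊗ b₂)(m ⊗ b) = b₁m ⊗ b₂b` and `(b₁ ⊗ b₂)(b ⊗ m) = b₁b ⊗ b₂m`)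
satisfying the cocycle condition `φ₂ = φ₁ ∘ φ₃`.  Then
`M = {m ∈ M' | 1 ⊗ m = φ(m ⊗ 1)}` is an `A`-submodule of `M'` and the map
`B ⊗[A] M → M'`, `b ⊗ m ↦ b • m`, is bijective. -/
theorem faithfully_flat_descent_modules [Module.FaithfullyFlat A B]
    (φ : M' ⊗[A] B ≃ₗ[A] B ⊗[A] M')
    (hleft : ∀ (b : B) (x : M' ⊗[A] B),
      φ (TensorProduct.map (bSmul A B M' b) LinearMap.id x) =
        TensorProduct.map (LinearMap.mulLeft A b) LinearMap.id (φ x))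
    (hright : ∀ (b : B) (x : M' ⊗[A] B),
      φ (TensorProduct.map LinearMap.id (LinearMap.mulLeft A b) x) =
        TensorProduct.map LinearMap.id (bSmul A B M' b) (φ x))
    (hcocycle : phiTwo A B M' φ.toLinearMap =
      (TensorProduct.assoc A B B M').symm.toLinearMap ∘ₗ
        phiOne A B M' φ.toLinearMap ∘ₗ
          (TensorProduct.assoc A B M' B).toLinearMap ∘ₗ
            phiThree A B M' φ.toLinearMap) :
    ∃ N : Submodule A M',
      (∀ m : M', m ∈ N ↔ (1 : B) ⊗ₜ[A] m = φ (m ⊗ₜ[A] (1 : B))) ∧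
      Function.Bijective (descentExpansion A B M' N) := by
  classical
  let α : M' →ₗ[A] B ⊗[A] M' := TensorProduct.mk A B M' 1
  let β : M' →ₗ[A] B ⊗[A] M' := φ.toLinearMap ∘ₗ (TensorProduct.mk A M' B).flip 1
  let N : Submodule A M' := LinearMap.ker (α - β)
  have hN : ∀ m : M', m ∈ N ↔ (1 : B) ⊗ₜ[A] m = φ (m ⊗ₜ[A] (1 : B)) := by
    intro m
    simp [N, α, β, LinearMap.mem_ker, sub_eq_zero]
  have hα : Function.Injective α := by
    let μ : B ⊗[A] M' →ₗ[A] M' := TensorProduct.lift (Algebra.lsmul A A M' : B →ₐ[A] Module.End A M').toLinearMap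
    apply Function.LeftInverse.injective (g := μ)
    intro m
    simp [μ, α]
  -- the key computation
  have key : ∀ x : B ⊗[A] N,
      φ (LinearMap.rTensor B N.subtype (TensorProduct.comm A B N x)) =
        α (descentExpansion A B M' N x) := by
    intro x
    induction x with
    | zero => simp
    | add x y hx hy => simp only [map_add, hx, hy]
    | tmul b n =>
      have h1 := hright b ((n : M') ⊗ₜ[A] (1 : B))
      rw [← (hN n).1 n.2] at h1
      simpa [descentExpansion, bSmul, α] using h1
  have hex : Function.Exact (LinearMap.rTensor B N.subtype) (LinearMap.rTensor B (α - β)) :=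
    Module.Flat.rTensor_exact B (LinearMap.exact_subtype_ker_map _)
  have hinjN : Function.Injective (LinearMap.rTensor B N.subtype) :=
    Module.Flat.rTensor_preserves_injective_linearMap _ N.injective_subtype
  refine ⟨N, hN, ?_, ?_⟩
  · rw [injective_iff_map_eq_zero]
    intro x hx
    have h := key x
    rw [hx, map_zero] at h
    have h2 := φ.injective (h.trans (map_zero φ).symm)
    have h3 := hinjN (h2.trans (map_zero _).symm)
    exact (LinearEquiv.map_eq_zero_iff _).1 h3
  · intro m
    let ψ : (B ⊗[A] M') ⊗[A] B →ₗ[A] (B ⊗[A] B) ⊗[A] M' :=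
      (TensorProduct.assoc A B B M').symm.toLinearMap ∘ₗ
        phiOne A B M' φ.toLinearMap ∘ₗ (TensorProduct.assoc A B M' B).toLinearMap
    have hψ : Function.Injective ψ := by
      have h1 : Function.Injective (phiOne A B M' φ.toLinearMap) :=
        (TensorProduct.congr (LinearEquiv.refl A B) φ).injective
      exact (TensorProduct.assoc A B B M').symm.injective.comp
        (h1.comp (TensorProduct.assoc A B M' B).injective)
    have e0 : ∀ y : M' ⊗[A] B, ψ (LinearMap.rTensor B α y) =
        (TensorProduct.assoc A B B M').symm ((1 : B) ⊗ₜ[A] φ y) := by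
      intro y
      induction y with
      | zero => simp
      | add x y hx hy => simp only [map_add, hx, hy, TensorProduct.tmul_add]
      | tmul n b => simp [ψ, α, phiOne]
    have e1 : ∀ y : M' ⊗[A] B, ψ (LinearMap.rTensor B β y) =
        LinearMap.rTensor M' ((TensorProduct.mk A B B).flip 1) (φ y) := by
      intro y
      induction y with
      | zero => simp
      | add x y hx hy => simp only [map_add, hx, hy]
      | tmul n b =>
        have h := LinearMap.congr_fun hcocycle ((n ⊗ₜ[A] (1 : B)) ⊗ₜ[A] b)
        have h2 : ψ (LinearMap.rTensor B β (n ⊗ₜ[A] b)) =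
          phiTwo A B M' φ.toLinearMap ((n ⊗ₜ[A] (1 : B)) ⊗ₜ[A] b) := by
            rw [h]; simp [ψ, β, phiThree]
        rw [h2]
        simp only [phiTwo, LinearMap.comp_apply, LinearEquiv.coe_coe, TensorProduct.assoc_tmul,
          TensorProduct.map_tmul, TensorProduct.comm_tmul, LinearMap.id_apply,
          TensorProduct.assoc_symm_tmul]
        generalize φ (n ⊗ₜ[A] b) = z
        induction z with
        | zero => simp
        | add x y hx hy => simp only [map_add, TensorProduct.add_tmul, hx, hy]
        | tmul c k => simp
    have hy : LinearMap.rTensor B (α - β) (φ.symm ((1 : B) ⊗ₜ[A] m)) = 0 := by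
      apply hψ
      have hs : ∀ y : M' ⊗[A] B, LinearMap.rTensor B (α - β) y + LinearMap.rTensor B β y =
          LinearMap.rTensor B α y := by
        intro y
        rw [← LinearMap.add_apply, ← LinearMap.rTensor_add]
        have hc : α - β + β = α := by
          ext z
          exact sub_add_cancel (α z) (β z)
        exact congrArg (fun g => LinearMap.rTensor B g y) hc
      have h := congrArg ψ (hs (φ.symm ((1 : B) ⊗ₜ[A] m)))
      rw [map_add, e0, e1] at h
      rw [map_zero]
      simpa using h
    obtain ⟨x, hx⟩ := (hex _).1 hy
    refine ⟨(TensorProduct.comm A B N).symm x, hα ?_⟩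
    rw [← key, LinearEquiv.apply_symm_apply, hx, LinearEquiv.apply_symm_apply]
    rfl

end DescentData
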